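/- arXiv:1011.3491 — 2 statements merged into one kernel-verified Lean document; each statement's English description precedes it below -/
import Mathlib

section
/- Let σ be a suffix array of a list T, let P be a pattern whose rank set A (as a finset of Fin |T|) is nonempty (with proof h). Then A equals the closed interval Finset.Icc (A.min' h) (A.max' h); in particular the number of suffixes of T having P as a prefix equals A.max' h − A.min' h + 1. (Counting occurrences of P amounts to subtracting the interval endpoints and adding 1.) -/
theorem prefix_of_lex_between {α : Type*} [LinearOrder α] (P : List α) :
    ∀ x y z : List α, P <+: x → P <+: z → List.Lex (· < ·) x y →
      List.Lex (· < ·) y z → P <+: y := by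
  induction P with
  | nil => intro x y z _ _ _ _; exact List.nil_prefix
  | cons p P ih =>
    rintro _ y _ ⟨s, rfl⟩ ⟨t, rfl⟩ hxy hyz
    simp only [List.cons_append] at hxy hyz
    cases hxy with
    | cons h1 =>
      cases hyz with
      | cons h2 =>
        exact (List.prefix_cons_inj p).2
          (ih _ _ _ (List.prefix_append P s) (List.prefix_append P t) h1 h2)
      | rel h2 => exact absurd h2 (lt_irrefl _)
    | rel h1 =>
      cases hyz with
      | cons h2 => exact absurd h1 (lt_irrefl _)
      | rel h2 => exact absurd h1 (lt_asymm h2)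

/-- The rank set `A` of a pattern `P`, if nonempty, is the closed interval
between its minimum and maximum; in particular the number of suffixes of `T`
having `P` as a prefix equals `A.max' h - A.min' h + 1`. -/
theorem rank_set_eq_Icc {α : Type*} [LinearOrder α] (T : List α)
    (σ : Fin T.length → Fin T.length) (hbij : Function.Bijective σ)
    (hmono : ∀ i j : Fin T.length, i < j →
      List.Lex (· < ·) (T.drop (σ i)) (T.drop (σ j)))
    (P : List α) (A : Finset (Fin T.length))
    (hA : ∀ i : Fin T.length, i ∈ A ↔ P <+: T.drop (σ i))
    (h : A.Nonempty) :
    A = Finset.Icc (A.min' h) (A.max' h) ∧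
      A.card = (A.max' h : ℕ) - (A.min' h : ℕ) + 1 := by
  have key : A = Finset.Icc (A.min' h) (A.max' h) := by
    ext i
    rw [Finset.mem_Icc]
    constructor
    · intro hi
      exact ⟨A.min'_le i hi, A.le_max' i hi⟩
    · rintro ⟨h1, h2⟩
      rcases h1.eq_or_lt with e | h1
      · exact e ▸ A.min'_mem h
      rcases h2.eq_or_lt with e | h2
      · exact e ▸ A.max'_mem h
      exact (hA i).2 (prefix_of_lex_between P _ _ _ ((hA _).1 (A.min'_mem h))
        ((hA _).1 (A.max'_mem h)) (hmono _ _ h1) (hmono _ _ h2))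
  refine ⟨key, ?_⟩
  have hle : (A.min' h : ℕ) ≤ (A.max' h : ℕ) := A.min'_le _ (A.max'_mem h)
  have hc := congrArg Finset.card key
  rw [Fin.card_Icc] at hc
  omega
end

section
/- Let T be a list over a linearly ordered type and P1, P2 lists. Suppose P1 is a prefix of T.drop j, P2 <lex T.drop (j + |P1|), and P2 is not a prefix of T.drop (j + |P1|). Then T.drop k <lex T.drop j for every position k such that P1 ++ P2 is a prefix of T.drop k. (The 'right arrow' case: a suffix starting with P1 whose displaced continuation is lexicographically strictly above P2, and does not begin with P2, lies strictly after every suffix starting with P1P2.) -/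
theorem lex_append_of_not_prefix {α : Type*} [LinearOrder α] {P X : List α}
    (h : List.Lex (· < ·) P X) (hn : ¬ P <+: X) (r : List α) :
    List.Lex (· < ·) (P ++ r) X := by
  induction h with
  | nil => exact absurd List.nil_prefix hn
  | rel h => exact List.Lex.rel h
  | cons _ ih =>
    exact List.Lex.cons (ih fun hp => hn (List.cons_prefix_cons.2 ⟨rfl, hp⟩))

theorem lex_append_left_aux {α : Type*} [LinearOrder α] {X Y : List α}
    (h : List.Lex (· < ·) X Y) (P : List α) :
    List.Lex (· < ·) (P ++ X) (P ++ Y) := by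
  induction P with
  | nil => exact h
  | cons a P ih => exact List.Lex.cons ih

/-- The "right arrow" case: a suffix starting with `P1` whose displaced
continuation is lexicographically strictly above `P2`, and does not begin with
`P2`, lies strictly after every suffix starting with `P1 ++ P2`. -/
theorem right_arrow_case {α : Type*} [LinearOrder α] (T P1 P2 : List α) (j : ℕ)
    (hpre : P1 <+: T.drop j)
    (hlt : List.Lex (· < ·) P2 (T.drop (j + P1.length)))
    (hnpre : ¬ P2 <+: T.drop (j + P1.length)) :
    ∀ k : ℕ, P1 ++ P2 <+: T.drop k →
      List.Lex (· < ·) (T.drop k) (T.drop j) := by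
  rintro k ⟨r, hr⟩
  obtain ⟨s, hs⟩ := hpre
  have h : T.drop (j + P1.length) = s := by
    rw [← List.drop_drop, ← hs, List.drop_left]
  rw [h] at hlt hnpre
  rw [← hr, ← hs, List.append_assoc]
  exact lex_append_left_aux (lex_append_of_not_prefix hlt hnpre r) P1
end
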